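/- For the Case II knotted sphere, where x₄(u) = λ·x₃(u) for a constant λ ∈ ℝ and x₃(u) > 0 for all u, with unit-speed profile curve, the first fundamental form coefficients are E = 1, F = 0, G = (1 + λ²)·x₃(u)², and the Gaussian curvature K = −(1/(2W))·∂_u(G_u / W) equals K(u) = −x₃''(u)/x₃(u). -/

import Mathlib

open Real

noncomputable def dot4 (a b : Fin 4 → ℝ) : ℝ :=
  a 0 * b 0 + a 1 * b 1 + a 2 * b 2 + a 3 * b 3

/-!
The surface is swept out by the rotations `R_v` of the last two coordinates: `X u v = R_v (γ u)`.
Since `R_v` is an isometry and `∂_v (R_v a) = R_v (J a)` with `J a = (0, 0, -a₄, a₃)`, the first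
fundamental form is `E = |γ'|²`, `F = ⟨γ', J γ⟩`, `G = |J γ|²`, free of `v`. The profile of Case II
turns this into the metric `du² + r² dv²` of geodesic polar type with `r = √(1 + λ²) x₃`. There
`W = |r|`, so `G_u / W = ±2 r'` with a sign that is constant near each point with `r ≠ 0`, and
`K = -r'' / r`, where the constant `√(1 + λ²)` cancels.
-/

open Filter Topology

section GaussCurvature

/-- The area density `W = √(EG - F²)`, in terms of the coefficients of the first fundamental form
as functions of `u` along a coordinate line `v = const`. -/
noncomputable def areaDensity (E F G : ℝ → ℝ) (u : ℝ) : ℝ :=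
  √(E u * G u - F u ^ 2)

/-- The Gaussian curvature `-(1 / (2W)) ∂_u (G_u / W)` along a coordinate line `v = const`; its
value is `0` where `W = 0`. -/
noncomputable def gaussCurvature (E F G : ℝ → ℝ) (u : ℝ) : ℝ :=
  -(1 / (2 * areaDensity E F G u)) * deriv (fun t => deriv G t / areaDensity E F G t) u

theorem areaDensity_one_zero_sq (r : ℝ → ℝ) (u : ℝ) : areaDensity 1 0 (r ^ 2) u = |r u| := by
  simp [areaDensity, Real.sqrt_sq_eq_abs]

variable {r r' : ℝ → ℝ} {r'' u : ℝ}

theorem gaussCurvature_one_zero_sq_of_pos (hr : ∀ᶠ t in 𝓝 u, HasDerivAt r (r' t) t)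
    (hr' : HasDerivAt r' r'' u) (hu : 0 < r u) :
    gaussCurvature 1 0 (r ^ 2) u = -(r'' / r u) := by
  have quotient_eq : (fun t => deriv (r ^ 2) t / areaDensity 1 0 (r ^ 2) t)
      =ᶠ[𝓝 u] fun t => 2 * r' t := by
    filter_upwards [hr, hr.self_of_nhds.continuousAt.eventually_const_lt hu] with t hrt hpos
    rw [areaDensity_one_zero_sq, abs_of_pos hpos, (hrt.pow 2).deriv, div_eq_iff hpos.ne']
    push_cast
    ring
  rw [gaussCurvature, quotient_eq.deriv_eq, (hr'.const_mul 2).deriv, areaDensity_one_zero_sq,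
    abs_of_pos hu]
  field_simp

theorem gaussCurvature_one_zero_sq (hr : ∀ᶠ t in 𝓝 u, HasDerivAt r (r' t) t)
    (hr' : HasDerivAt r' r'' u) (hu : r u ≠ 0) :
    gaussCurvature 1 0 (r ^ 2) u = -(r'' / r u) := by
  rcases hu.lt_or_gt with hneg | hpos
  · simpa only [neg_sq, Pi.neg_apply, neg_div_neg_eq] using
      gaussCurvature_one_zero_sq_of_pos (hr.mono fun _ ht => ht.neg) hr'.neg
        (Left.neg_pos_iff.mpr hneg)
  · exact gaussCurvature_one_zero_sq_of_pos hr hr' hpos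

theorem gaussCurvature_one_zero_const_mul_sq {c : ℝ} (hr : ∀ᶠ t in 𝓝 u, HasDerivAt r (r' t) t)
    (hr' : HasDerivAt r' r'' u) (hc : 0 < c) (hu : r u ≠ 0) :
    gaussCurvature 1 0 (fun t => c * r t ^ 2) u = -(r'' / r u) := by
  have hs : √c ≠ 0 := (Real.sqrt_pos.mpr hc).ne'
  have sq_radius : (fun t => c * r t ^ 2) = (fun t => √c * r t) ^ 2 := by
    ext t
    simp only [Pi.pow_apply, mul_pow, Real.sq_sqrt hc.le]
  rw [sq_radius, gaussCurvature_one_zero_sq (hr.mono fun _ ht => ht.const_mul √c)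
    (hr'.const_mul √c) (mul_ne_zero hs hu), mul_div_mul_left _ _ hs]

end GaussCurvature

section Rotation

/-- The rotation of `ℝ⁴` by the angle `v` in the plane of the last two coordinates; the knotted
sphere with profile curve `γ` is `fun u v => rotate v (γ u)`. -/
noncomputable def rotate (v : ℝ) (a : Fin 4 → ℝ) : Fin 4 → ℝ :=
  ![a 0, a 1, a 2 * cos v - a 3 * sin v, a 2 * sin v + a 3 * cos v]

theorem dot4_rotate (v : ℝ) (a b : Fin 4 → ℝ) : dot4 (rotate v a) (rotate v b) = dot4 a b := by
  simp only [dot4, rotate, Matrix.cons_val]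
  linear_combination (a 2 * b 2 + a 3 * b 3) * sin_sq_add_cos_sq v

theorem hasDerivAt_rotate_comp {γ : ℝ → Fin 4 → ℝ} {γ' : Fin 4 → ℝ} {u : ℝ}
    (hγ : HasDerivAt γ γ' u) (v : ℝ) :
    HasDerivAt (fun t => rotate v (γ t)) (rotate v γ') u := by
  rw [hasDerivAt_pi] at hγ ⊢
  intro i
  fin_cases i
  · exact hγ 0
  · exact hγ 1
  · exact ((hγ 2).mul_const _).sub ((hγ 3).mul_const _)
  · exact ((hγ 2).mul_const _).add ((hγ 3).mul_const _)

theorem hasDerivAt_rotate (a : Fin 4 → ℝ) (v : ℝ) :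
    HasDerivAt (fun t => rotate t a) (rotate v ![0, 0, -a 3, a 2]) v := by
  rw [hasDerivAt_pi]
  intro i
  fin_cases i
  · exact hasDerivAt_const v (a 0)
  · exact hasDerivAt_const v (a 1)
  · refine (((hasDerivAt_cos v).const_mul (a 2)).sub
      ((hasDerivAt_sin v).const_mul (a 3))).congr_deriv ?_
    change _ = -a 3 * cos v - a 2 * sin v
    ring
  · refine (((hasDerivAt_sin v).const_mul (a 2)).add
      ((hasDerivAt_cos v).const_mul (a 3))).congr_deriv ?_
    change _ = -a 3 * sin v + a 2 * cos v
    ring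

end Rotation

section CaseII

/-- The profile curve of Case II: the fourth coordinate is the multiple `lam` of the third. -/
def caseIIProfile (x₁ x₂ x₃ : ℝ → ℝ) (lam u : ℝ) : Fin 4 → ℝ :=
  ![x₁ u, x₂ u, x₃ u, lam * x₃ u]

theorem hasDerivAt_caseIIProfile {x₁ x₂ x₃ : ℝ → ℝ} {x₁' x₂' x₃' u : ℝ}
    (h₁ : HasDerivAt x₁ x₁' u) (h₂ : HasDerivAt x₂ x₂' u) (h₃ : HasDerivAt x₃ x₃' u) (lam : ℝ) :
    HasDerivAt (caseIIProfile x₁ x₂ x₃ lam) ![x₁', x₂', x₃', lam * x₃'] u := by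
  rw [hasDerivAt_pi]
  intro i
  fin_cases i
  · exact h₁
  · exact h₂
  · exact h₃
  · exact h₃.const_mul lam

end CaseII

theorem caseII_knotted_sphere_gaussian_curvature_general
    (x₁ x₂ x₃ x₄ : ℝ → ℝ)
    (hx₁ : Differentiable ℝ x₁) (hx₂ : Differentiable ℝ x₂)
    (hx₃ : Differentiable ℝ x₃) (hx₃' : Differentiable ℝ (deriv x₃))
    (hunit : ∀ u, deriv x₁ u ^ 2 + deriv x₂ u ^ 2 + deriv x₃ u ^ 2 + deriv x₄ u ^ 2 = 1)
    (X : ℝ → ℝ → Fin 4 → ℝ)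
    (hX : ∀ u v, X u v =
      ![x₁ u, x₂ u, x₃ u * Real.cos v - x₄ u * Real.sin v,
        x₃ u * Real.sin v + x₄ u * Real.cos v])
    (Xu Xv : ℝ → ℝ → Fin 4 → ℝ)
    (hXu : ∀ u v, Xu u v = deriv (fun t => X t v) u)
    (hXv : ∀ u v, Xv u v = deriv (fun t => X u t) v)
    (lam : ℝ) (hx₄lam : ∀ u, x₄ u = lam * x₃ u)
    (E F G W : ℝ → ℝ → ℝ)
    (hE : ∀ u v, E u v = dot4 (Xu u v) (Xu u v))
    (hF : ∀ u v, F u v = dot4 (Xu u v) (Xv u v))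
    (hG : ∀ u v, G u v = dot4 (Xv u v) (Xv u v))
    (hW : ∀ u v, W u v = Real.sqrt (E u v * G u v - F u v ^ 2))
    (Gu : ℝ → ℝ → ℝ)
    (hGu : ∀ u v, Gu u v = deriv (fun t => G t v) u)
    (K : ℝ → ℝ → ℝ)
    (hK : ∀ u v, K u v = -(1 / (2 * W u v)) * deriv (fun t => Gu t v / W t v) u) :
    ∀ u v,
      E u v = 1 ∧
      F u v = 0 ∧
      G u v = (1 + lam ^ 2) * x₃ u ^ 2 ∧
      (x₃ u ≠ 0 → K u v = -(deriv (deriv x₃) u / x₃ u)) := by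
  obtain rfl : x₄ = fun t => lam * x₃ t := funext hx₄lam
  let γ := caseIIProfile x₁ x₂ x₃ lam
  let γ' := fun u => ![deriv x₁ u, deriv x₂ u, deriv x₃ u, lam * deriv x₃ u]
  have X_eq : X = fun u v => rotate v (γ u) := funext₂ hX
  have Xu_eq u v : Xu u v = rotate v (γ' u) := by
    rw [hXu, X_eq]
    exact (hasDerivAt_rotate_comp (hasDerivAt_caseIIProfile (hx₁ u).hasDerivAt (hx₂ u).hasDerivAt
      (hx₃ u).hasDerivAt lam) v).deriv
  have Xv_eq u v : Xv u v = rotate v ![0, 0, -(lam * x₃ u), x₃ u] := by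
    rw [hXv, X_eq]
    exact (hasDerivAt_rotate (γ u) v).deriv
  have E_eq u v : E u v = 1 := by
    rw [hE, Xu_eq, dot4_rotate, ← hunit u, deriv_const_mul_field]
    simp only [dot4, γ', Matrix.cons_val]
    ring
  have F_eq u v : F u v = 0 := by
    rw [hF, Xu_eq, Xv_eq, dot4_rotate]
    simp only [dot4, γ', Matrix.cons_val]
    ring
  have G_eq u v : G u v = (1 + lam ^ 2) * x₃ u ^ 2 := by
    rw [hG, Xv_eq, dot4_rotate]
    simp only [dot4, Matrix.cons_val]
    ring
  refine fun u v => ⟨E_eq u v, F_eq u v, G_eq u v, fun hu => ?_⟩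
  calc K u v = gaussCurvature 1 0 (fun t => (1 + lam ^ 2) * x₃ t ^ 2) u := by
        simp only [hK, hGu, hW, E_eq, F_eq, G_eq, gaussCurvature, areaDensity,
          Pi.one_apply, Pi.zero_apply]
    _ = -(deriv (deriv x₃) u / x₃ u) :=
        gaussCurvature_one_zero_const_mul_sq (.of_forall fun t => (hx₃ t).hasDerivAt)
          (hx₃' u).hasDerivAt (by positivity) hu

theorem caseII_knotted_sphere_gaussian_curvature
    (x₁ x₂ x₃ x₄ : ℝ → ℝ)
    (hx₁ : ContDiff ℝ (⊤ : ℕ∞) x₁) (hx₂ : ContDiff ℝ (⊤ : ℕ∞) x₂)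
    (hx₃ : ContDiff ℝ (⊤ : ℕ∞) x₃) (hx₄ : ContDiff ℝ (⊤ : ℕ∞) x₄)
    (hunit : ∀ u, deriv x₁ u ^ 2 + deriv x₂ u ^ 2 + deriv x₃ u ^ 2 + deriv x₄ u ^ 2 = 1)
    (X : ℝ → ℝ → Fin 4 → ℝ)
    (hX : ∀ u v, X u v =
      ![x₁ u, x₂ u, x₃ u * Real.cos v - x₄ u * Real.sin v,
        x₃ u * Real.sin v + x₄ u * Real.cos v])
    (Xu Xv : ℝ → ℝ → Fin 4 → ℝ)
    (hXu : ∀ u v, Xu u v = deriv (fun t => X t v) u)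
    (hXv : ∀ u v, Xv u v = deriv (fun t => X u t) v)
    (lam : ℝ) (hx₄lam : ∀ u, x₄ u = lam * x₃ u)
    (hx₃pos : ∀ u, x₃ u > 0)
    (E F G W : ℝ → ℝ → ℝ)
    (hE : ∀ u v, E u v = dot4 (Xu u v) (Xu u v))
    (hF : ∀ u v, F u v = dot4 (Xu u v) (Xv u v))
    (hG : ∀ u v, G u v = dot4 (Xv u v) (Xv u v))
    (hW : ∀ u v, W u v = Real.sqrt (E u v * G u v - F u v ^ 2))
    (Gu : ℝ → ℝ → ℝ)
    (hGu : ∀ u v, Gu u v = deriv (fun t => G t v) u)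
    (K : ℝ → ℝ → ℝ)
    (hK : ∀ u v, K u v = -(1 / (2 * W u v)) * deriv (fun t => Gu t v / W t v) u)
    : ∀ u v,
      E u v = 1 ∧
      F u v = 0 ∧
      G u v = (1 + lam ^ 2) * x₃ u ^ 2 ∧
      K u v = -(deriv (deriv x₃) u / x₃ u) := fun u v =>
  have ⟨E_eq, F_eq, G_eq, K_eq⟩ := caseII_knotted_sphere_gaussian_curvature_general x₁ x₂ x₃ x₄
    (hx₁.differentiable (by simp)) (hx₂.differentiable (by simp)) (hx₃.differentiable (by simp))
    ((contDiff_infty_iff_deriv.mp hx₃).2.differentiable (by simp)) hunit X hX Xu Xv hXu hXv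
    lam hx₄lam E F G W hE hF hG hW Gu hGu K hK u v
  ⟨E_eq, F_eq, G_eq, K_eq (hx₃pos u).ne'⟩
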